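/- Let γ_π > 0 be a policy-dependent IX parameter for each π in the finite class Π, and let ĥπ_n maximize the non-uniformly scaled estimator ṽ†_n(π) = (1/n) Σ_{t=1}^n π(A_t|X_t) R_t / (μ(A_t|X_t) + γ_π) − log(2|Π|/δ)/(2γ_π n) over Π. Then with probability at least 1-δ, simultaneously for every comparator π* ∈ Π, v(π*) - v(ĥπ_n) ≤ log(2|Π|/δ)/(γ_{π*} n) + 2γ_{π*}·C_{γ_{π*}}(π*). -/

import Mathlib

/-! The argument is a Chernoff bound for each tail of the implicit-exploration (IX) estimate,
followed by a union bound over the `2|Π|` events and the optimality of the selected policy.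

Write `r̃ = π(A|X) R / (μ(A|X) + γ)` and `L = log (2|Π|/δ)`.

* Upper tail. With `z = π R / μ` one has `r̃ ≤ z / (1 + γ z)` because `π R ≤ 1`, and
  `2y / (1 + y) ≤ log (1 + 2y)`, so `exp (2γ r̃) ≤ 1 + 2γ π R / μ`, whose mean is
  `1 + 2γ v(π) ≤ exp (2γ v(π))`. Hence `ṽ(π) ≤ v(π) + L / (2γn)` outside an event of
  probability `δ / (2|Π|)`.
* Lower tail. From `exp (-y) ≤ 1 - y + y² / 2` and `(π R)² ≤ π R`, the mean of `exp (-2γ r̃)` is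
  at most `1 - 2γ v(π) + 4γ² C_γ(π)`. Hence `ṽ(π) ≥ v(π) - 2γ C_γ(π) - L / (2γn)` outside an
  event of probability `δ / (2|Π|)`.

Both pointwise bounds are affine in `R`, and `lintegral_obsLaw_le` integrates such a bound.
The deviation term in the upper tail is exactly the penalty subtracted in the estimator, so it
cancels for the selected policy, and only quantities of the comparator remain. -/

open MeasureTheory ProbabilityTheory

/-- A stochastic contextual bandit instance: context distribution `ν`, behavior policy `μb`,
reward kernel `rker` supported on `[0,1]`, and mean reward function `r`. -/
structure CBSetup (𝓧 𝓐 : Type*) [MeasurableSpace 𝓧] [Fintype 𝓐] [MeasurableSpace 𝓐] where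
  /-- the context distribution -/
  ν : Measure 𝓧
  ν_prob : IsProbabilityMeasure ν
  /-- the behavior policy `μ(a|x)` -/
  μb : 𝓧 → 𝓐 → ℝ
  μb_nonneg : ∀ x a, 0 ≤ μb x a
  μb_sum_one : ∀ x, ∑ a, μb x a = 1
  μb_meas : ∀ a, Measurable fun x => μb x a
  /-- the reward kernel `p(·|x,a)` -/
  rker : 𝓧 → 𝓐 → Measure ℝ
  rker_prob : ∀ x a, IsProbabilityMeasure (rker x a)
  rker_supp : ∀ x a, rker x a (Set.Icc (0:ℝ) 1)ᶜ = 0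
  rker_meas : ∀ a, Measurable fun x => rker x a
  /-- the mean reward `r(x,a)` -/
  r : 𝓧 → 𝓐 → ℝ
  r_def : ∀ x a, r x a = ∫ ρ, ρ ∂(rker x a)
  r_meas : ∀ a, Measurable fun x => r x a

variable {𝓧 𝓐 : Type*} [MeasurableSpace 𝓧] [Fintype 𝓐] [MeasurableSpace 𝓐]
  [MeasurableSingletonClass 𝓐]

/-- The law of a single observation `(X, A, R)` with `X ~ ν`, `A ~ μ(·|X)`, `R ~ p(·|X,A)`. -/
noncomputable def obsLaw (S : CBSetup 𝓧 𝓐) : Measure (𝓧 × 𝓐 × ℝ) :=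
  S.ν.bind fun x => Measure.sum fun a =>
    ENNReal.ofReal (S.μb x a) • (S.rker x a).map fun ρ => (x, a, ρ)

/-- The law of the i.i.d. dataset `(X_t, A_t, R_t)_{t=1}^n`. -/
noncomputable def dataLaw (S : CBSetup 𝓧 𝓐) (n : ℕ) : Measure (Fin n → 𝓧 × 𝓐 × ℝ) :=
  Measure.pi fun _ : Fin n => obsLaw S

/-- A (stochastic, measurable) policy: a map from contexts to distributions over actions. -/
def IsPolicy (π : 𝓧 → 𝓐 → ℝ) : Prop :=
  (∀ x a, 0 ≤ π x a) ∧ (∀ x, ∑ a, π x a = 1) ∧ (∀ a, Measurable fun x => π x a)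

/-- The value `v(π) = E[Σ_a π(a|X) r(X,a)]` of a policy. -/
noncomputable def pval (S : CBSetup 𝓧 𝓐) (π : 𝓧 → 𝓐 → ℝ) : ℝ :=
  ∫ x, ∑ a, π x a * S.r x a ∂S.ν

/-- The smoothed coverage ratio `C_γ(π) = E[Σ_a π(a|X) r(X,a)/(μ(a|X)+γ)]`. -/
noncomputable def covγ (S : CBSetup 𝓧 𝓐) (γ : ℝ) (π : 𝓧 → 𝓐 → ℝ) : ℝ :=
  ∫ x, ∑ a, π x a * S.r x a / (S.μb x a + γ) ∂S.ν

/-- The IX reward estimate `r̃(π) = π(A|X) R / (μ(A|X) + γ)` for one observation `ω = (X,A,R)`. -/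
noncomputable def ixTerm (S : CBSetup 𝓧 𝓐) (γ : ℝ) (π : 𝓧 → 𝓐 → ℝ) (ω : 𝓧 × 𝓐 × ℝ) : ℝ :=
  π ω.1 ω.2.1 * ω.2.2 / (S.μb ω.1 ω.2.1 + γ)

/-- The IX value estimator `ṽ_n(π) = (1/n) Σ_t π(A_t|X_t) R_t / (μ(A_t|X_t) + γ)`. -/
noncomputable def ixEst (S : CBSetup 𝓧 𝓐) (γ : ℝ) {n : ℕ} (π : 𝓧 → 𝓐 → ℝ)
    (D : Fin n → 𝓧 × 𝓐 × ℝ) : ℝ :=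
  (∑ t, ixTerm S γ π (D t)) / n

/-! ### The observation law -/

lemma measurable_obsKernel (S : CBSetup 𝓧 𝓐) :
    Measurable fun x => Measure.sum fun a =>
      ENNReal.ofReal (S.μb x a) • (S.rker x a).map fun ρ : ℝ => (x, a, ρ) := by
  refine Measure.measurable_of_measurable_coe _ fun s hs => ?_
  have hmap : ∀ (x : 𝓧) (a : 𝓐), Measurable fun ρ : ℝ => (x, a, ρ) := fun x a => by fun_prop
  simp only [Measure.sum_apply _ hs, Measure.smul_apply, Measure.map_apply (hmap _ _) hs,
    tsum_fintype, smul_eq_mul]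
  refine Finset.measurable_sum _ fun a _ => ?_
  refine (S.μb_meas a).ennreal_ofReal.mul ?_
  let κ : Kernel 𝓧 ℝ := ⟨fun x => S.rker x a, S.rker_meas a⟩
  have : IsMarkovKernel κ := ⟨fun x => S.rker_prob x a⟩
  have ht : MeasurableSet ((fun p : 𝓧 × ℝ => (p.1, a, p.2)) ⁻¹' s) :=
    (by fun_prop : Measurable fun p : 𝓧 × ℝ => (p.1, a, p.2)) hs
  exact Kernel.measurable_kernel_prodMk_left (κ := κ) ht

lemma lintegral_obsLaw (S : CBSetup 𝓧 𝓐) {f : 𝓧 × 𝓐 × ℝ → ENNReal} (hf : Measurable f) :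
    ∫⁻ ω, f ω ∂(obsLaw S) =
      ∫⁻ x, ∑ a, ENNReal.ofReal (S.μb x a) * ∫⁻ ρ, f (x, a, ρ) ∂(S.rker x a) ∂S.ν := by
  rw [obsLaw, Measure.lintegral_bind (measurable_obsKernel S).aemeasurable hf.aemeasurable]
  have hmap : ∀ (x : 𝓧) (a : 𝓐), Measurable fun ρ : ℝ => (x, a, ρ) := fun x a => by fun_prop
  simp only [lintegral_sum_measure, lintegral_smul_measure, lintegral_map hf (hmap _ _),
    tsum_fintype, smul_eq_mul]

lemma isProbabilityMeasure_obsLaw (S : CBSetup 𝓧 𝓐) : IsProbabilityMeasure (obsLaw S) := by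
  have := S.ν_prob
  have := S.rker_prob
  constructor
  rw [← lintegral_one, lintegral_obsLaw S measurable_const]
  have h : ∀ x, ∑ a, ENNReal.ofReal (S.μb x a) = 1 := fun x => by
    rw [← ENNReal.ofReal_sum_of_nonneg fun a _ => S.μb_nonneg x a, S.μb_sum_one x,
      ENNReal.ofReal_one]
  simp [h]

lemma ae_reward_mem (S : CBSetup 𝓧 𝓐) (x : 𝓧) (a : 𝓐) :
    ∀ᵐ ρ ∂(S.rker x a), ρ ∈ Set.Icc (0 : ℝ) 1 := S.rker_supp x a

lemma integrable_reward (S : CBSetup 𝓧 𝓐) (x : 𝓧) (a : 𝓐) :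
    Integrable (fun ρ : ℝ => ρ) (S.rker x a) := by
  have := S.rker_prob x a
  refine Integrable.of_bound measurable_id.aestronglyMeasurable 1 ?_
  filter_upwards [ae_reward_mem S x a] with ρ hρ
  rw [Real.norm_eq_abs, abs_of_nonneg hρ.1]
  exact hρ.2

lemma reward_mem (S : CBSetup 𝓧 𝓐) (x : 𝓧) (a : 𝓐) : S.r x a ∈ Set.Icc (0 : ℝ) 1 := by
  have := S.rker_prob x a
  rw [S.r_def]
  constructor
  · exact integral_nonneg_of_ae ((ae_reward_mem S x a).mono fun ρ h => h.1)
  · calc ∫ ρ, ρ ∂(S.rker x a) ≤ ∫ _, (1 : ℝ) ∂(S.rker x a) :=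
          integral_mono_ae (integrable_reward S x a) (integrable_const _)
            ((ae_reward_mem S x a).mono fun ρ h => h.2)
      _ = 1 := by simp

/-- Moment generating function bound from a pointwise one: if `f(x,a,ρ) ≤ 1 + β(x,a) ρ` for rewards
`ρ ∈ [0,1]`, then `E f ≤ 1 + E g ≤ exp (E g)` for any integrable `g` dominating the conditional
mean `∑ₐ μ(a|x) β(x,a) r(x,a)`. -/
lemma lintegral_obsLaw_le (S : CBSetup 𝓧 𝓐) {f : 𝓧 × 𝓐 × ℝ → ℝ} (hf : Measurable f)
    (hf0 : ∀ ω, 0 ≤ f ω) (β : 𝓧 → 𝓐 → ℝ)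
    (hfβ : ∀ x a, ∀ ρ ∈ Set.Icc (0 : ℝ) 1, f (x, a, ρ) ≤ 1 + β x a * ρ)
    {g : 𝓧 → ℝ} (hg : Integrable g S.ν)
    (hβg : ∀ x, ∑ a, S.μb x a * (β x a * S.r x a) ≤ g x) :
    ∫⁻ ω, ENNReal.ofReal (f ω) ∂(obsLaw S) ≤ ENNReal.ofReal (Real.exp (∫ x, g x ∂S.ν)) := by
  have := S.ν_prob
  have hpos : ∀ x a, ∀ ρ ∈ Set.Icc (0 : ℝ) 1, 0 ≤ 1 + β x a * ρ := fun x a ρ hρ =>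
    (hf0 _).trans (hfβ x a ρ hρ)
  have hsum : ∀ x, ∑ a, S.μb x a * (1 + β x a * S.r x a) ≤ 1 + g x := fun x => by
    simp only [mul_add, mul_one, Finset.sum_add_distrib, S.μb_sum_one x]
    linarith [hβg x]
  have hterm : ∀ x a, 0 ≤ S.μb x a * (1 + β x a * S.r x a) := fun x a =>
    mul_nonneg (S.μb_nonneg x a) (hpos x a _ (reward_mem S x a))
  have hg0 : ∀ x, 0 ≤ 1 + g x := fun x =>
    (Finset.sum_nonneg fun a _ => hterm x a).trans (hsum x)
  have hinner : ∀ x a, ∫⁻ ρ, ENNReal.ofReal (f (x, a, ρ)) ∂(S.rker x a) ≤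
      ENNReal.ofReal (1 + β x a * S.r x a) := fun x a => by
    have := S.rker_prob x a
    have hint : Integrable (fun ρ : ℝ => β x a * ρ) (S.rker x a) :=
      (integrable_reward S x a).const_mul _
    calc ∫⁻ ρ, ENNReal.ofReal (f (x, a, ρ)) ∂(S.rker x a)
        ≤ ∫⁻ ρ, ENNReal.ofReal (1 + β x a * ρ) ∂(S.rker x a) :=
          lintegral_mono_ae ((ae_reward_mem S x a).mono fun ρ hρ =>
            ENNReal.ofReal_le_ofReal (hfβ x a ρ hρ))
      _ = ENNReal.ofReal (∫ ρ, (1 + β x a * ρ) ∂(S.rker x a)) :=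
          (ofReal_integral_eq_lintegral_ofReal ((integrable_const _).add hint)
            ((ae_reward_mem S x a).mono fun ρ hρ => hpos x a ρ hρ)).symm
      _ = ENNReal.ofReal (1 + β x a * S.r x a) := by
          rw [integral_add (integrable_const _) hint, integral_const_mul, ← S.r_def]
          simp
  rw [lintegral_obsLaw S hf.ennreal_ofReal]
  calc _ ≤ ∫⁻ x, ENNReal.ofReal (1 + g x) ∂S.ν := by
        refine lintegral_mono fun x => ?_
        calc _ ≤ ∑ a, ENNReal.ofReal (S.μb x a) * ENNReal.ofReal (1 + β x a * S.r x a) :=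
              Finset.sum_le_sum fun a _ => mul_le_mul_right (hinner x a) _
          _ = ENNReal.ofReal (∑ a, S.μb x a * (1 + β x a * S.r x a)) := by
              rw [ENNReal.ofReal_sum_of_nonneg fun a _ => hterm x a]
              exact Finset.sum_congr rfl fun a _ => (ENNReal.ofReal_mul (S.μb_nonneg x a)).symm
          _ ≤ _ := ENNReal.ofReal_le_ofReal (hsum x)
    _ = ENNReal.ofReal (∫ x, (1 + g x) ∂S.ν) :=
        (ofReal_integral_eq_lintegral_ofReal ((integrable_const _).add hg)
          (Filter.Eventually.of_forall hg0)).symm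
    _ ≤ _ := by
        refine ENNReal.ofReal_le_ofReal ?_
        rw [integral_add (integrable_const _) hg]
        have := Real.add_one_le_exp (∫ x, g x ∂S.ν)
        simp only [integral_const, probReal_univ, smul_eq_mul, mul_one]
        linarith

/-! ### Chernoff bound for the i.i.d. dataset -/

lemma chernoff_dataLaw (S : CBSetup 𝓧 𝓐) (n : ℕ) {h : 𝓧 × 𝓐 × ℝ → ℝ} (hh : Measurable h)
    {c : ℝ} (hc : ∫⁻ ω, ENNReal.ofReal (Real.exp (h ω)) ∂(obsLaw S) ≤
      ENNReal.ofReal (Real.exp c)) (L : ℝ) :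
    dataLaw S n {D | n * c + L < ∑ t, h (D t)} ≤ ENNReal.ofReal (Real.exp (-L)) := by
  have := isProbabilityMeasure_obsLaw S
  have hF : Measurable fun ω => ENNReal.ofReal (Real.exp (h ω)) :=
    (Real.measurable_exp.comp hh).ennreal_ofReal
  have hprod : ∫⁻ D, ∏ t, ENNReal.ofReal (Real.exp (h (D t))) ∂(dataLaw S n) =
      ∏ _t : Fin n, ∫⁻ ω, ENNReal.ofReal (Real.exp (h ω)) ∂(obsLaw S) := by
    have hind : iIndepFun (fun (t : Fin n) (D : Fin n → 𝓧 × 𝓐 × ℝ) =>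
        ENNReal.ofReal (Real.exp (h (D t)))) (dataLaw S n) :=
      iIndepFun_pi (μ := fun _ : Fin n => obsLaw S)
        (X := fun _ ω => ENNReal.ofReal (Real.exp (h ω))) fun _ => hF.aemeasurable
    rw [lintegral_prod_eq_prod_lintegral_of_indepFun Finset.univ _ hind
      fun t => hF.comp (measurable_pi_apply t)]
    refine Finset.prod_congr rfl fun t _ => ?_
    exact (measurePreserving_eval (fun _ : Fin n => obsLaw S) t).lintegral_comp hF
  have hexp : ∀ D : Fin n → 𝓧 × 𝓐 × ℝ, ∏ t, ENNReal.ofReal (Real.exp (h (D t))) =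
      ENNReal.ofReal (Real.exp (∑ t, h (D t))) := fun D => by
    rw [Real.exp_sum, ENNReal.ofReal_prod_of_nonneg fun t _ => (Real.exp_pos _).le]
  have hle : ∫⁻ D, ENNReal.ofReal (Real.exp (∑ t, h (D t))) ∂(dataLaw S n) ≤
      ENNReal.ofReal (Real.exp (n * c)) := by
    simp only [← hexp]
    rw [hprod, Finset.prod_const, Finset.card_univ, Fintype.card_fin, Real.exp_nat_mul,
      ENNReal.ofReal_pow (Real.exp_pos _).le]
    exact pow_le_pow_left' hc n
  have hmeas : Measurable fun D : Fin n → 𝓧 × 𝓐 × ℝ =>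
      ENNReal.ofReal (Real.exp (∑ t, h (D t))) := by fun_prop
  have hmarkov := mul_meas_ge_le_lintegral (μ := dataLaw S n) hmeas
    (ENNReal.ofReal (Real.exp (n * c + L)))
  have hsub : {D : Fin n → 𝓧 × 𝓐 × ℝ | n * c + L < ∑ t, h (D t)} ⊆
      {D | ENNReal.ofReal (Real.exp (n * c + L)) ≤ ENNReal.ofReal (Real.exp (∑ t, h (D t)))} :=
    fun D hD => ENNReal.ofReal_le_ofReal (Real.exp_le_exp.2 (le_of_lt hD))
  refine (measure_mono hsub).trans ?_
  have hsplit : ENNReal.ofReal (Real.exp (n * c)) =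
      ENNReal.ofReal (Real.exp (n * c + L)) * ENNReal.ofReal (Real.exp (-L)) := by
    rw [← ENNReal.ofReal_mul (Real.exp_pos _).le, ← Real.exp_add]
    congr 2
    ring
  have h3 := hmarkov.trans (hle.trans_eq hsplit)
  exact (ENNReal.mul_le_mul_iff_right (by simpa using Real.exp_pos _) ENNReal.ofReal_ne_top).1 h3

/-! ### Exponential moments of the IX estimate -/

lemma IsPolicy.le_one {π : 𝓧 → 𝓐 → ℝ} (hπ : IsPolicy π) (x : 𝓧) (a : 𝓐) : π x a ≤ 1 :=
  (Finset.single_le_sum (fun b _ => hπ.1 x b) (Finset.mem_univ a)).trans_eq (hπ.2.1 x)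

lemma measurable_ixTerm (S : CBSetup 𝓧 𝓐) (γ : ℝ) {π : 𝓧 → 𝓐 → ℝ} (hπ : IsPolicy π) :
    Measurable (ixTerm S γ π) := by
  have h1 : Measurable fun p : 𝓧 × 𝓐 => π p.1 p.2 :=
    measurable_from_prod_countable_left fun a => hπ.2.2 a
  have h2 : Measurable fun p : 𝓧 × 𝓐 => S.μb p.1 p.2 :=
    measurable_from_prod_countable_left fun a => S.μb_meas a
  have h3 : Measurable fun ω : 𝓧 × 𝓐 × ℝ => (ω.1, ω.2.1) := by fun_prop
  have h4 : Measurable fun ω : 𝓧 × 𝓐 × ℝ => ω.2.2 := by fun_prop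
  exact ((h1.comp h3).mul h4).div ((h2.comp h3).add_const γ)

lemma integrable_value (S : CBSetup 𝓧 𝓐) {π : 𝓧 → 𝓐 → ℝ} (hπ : IsPolicy π) :
    Integrable (fun x => ∑ a, π x a * S.r x a) S.ν := by
  have := S.ν_prob
  refine integrable_finsetSum _ fun a _ => ?_
  refine Integrable.of_bound ((hπ.2.2 a).mul (S.r_meas a)).aestronglyMeasurable 1
    (Filter.Eventually.of_forall fun x => ?_)
  have hr := reward_mem S x a
  rw [Real.norm_eq_abs, abs_of_nonneg (mul_nonneg (hπ.1 x a) hr.1)]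
  exact mul_le_one₀ (hπ.le_one x a) hr.1 hr.2

lemma integrable_coverage (S : CBSetup 𝓧 𝓐) {γ : ℝ} (hγ : 0 < γ) {π : 𝓧 → 𝓐 → ℝ}
    (hπ : IsPolicy π) :
    Integrable (fun x => ∑ a, π x a * S.r x a / (S.μb x a + γ)) S.ν := by
  have := S.ν_prob
  refine integrable_finsetSum _ fun a _ => ?_
  refine Integrable.of_bound (((hπ.2.2 a).mul (S.r_meas a)).div
    ((S.μb_meas a).add_const γ)).aestronglyMeasurable (1 / γ)
    (Filter.Eventually.of_forall fun x => ?_)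
  have hr := reward_mem S x a
  have hμ := S.μb_nonneg x a
  have h0 := mul_nonneg (hπ.1 x a) hr.1
  rw [Real.norm_eq_abs, abs_of_nonneg (by positivity)]
  exact div_le_div₀ zero_le_one (mul_le_one₀ (hπ.le_one x a) hr.1 hr.2) hγ (by linarith)

/-- The implicit-exploration inequality: `γ` in the denominator turns the exponential of the
estimate into an affine function of the unbiased importance-weighted one. -/
lemma exp_ix_le {m γ p : ℝ} (hm : 0 < m) (hγ : 0 < γ) (hp0 : 0 ≤ p) (hp1 : p ≤ 1) :
    Real.exp (2 * γ * (p / (m + γ))) ≤ 1 + 2 * γ * (p / m) := by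
  have hx : 0 ≤ 2 * γ * (p / m) := by positivity
  rw [← Real.le_log_iff_exp_le (by linarith)]
  refine le_trans ?_ (Real.le_log_one_add_of_nonneg hx)
  have e : 2 * (2 * γ * (p / m)) / (2 * γ * (p / m) + 2) = 2 * γ * (p / (m + γ * p)) := by
    field_simp
    ring
  rw [e]
  have : m + γ * p ≤ m + γ := by nlinarith
  gcongr

lemma exp_neg_le_quadratic {y : ℝ} (hy : 0 ≤ y) : Real.exp (-y) ≤ 1 - y + y ^ 2 / 2 := by
  have h1 := Real.quadratic_le_exp_of_nonneg hy
  have h2 : 0 < 1 - y + y ^ 2 / 2 := by nlinarith [sq_nonneg (y - 1)]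
  rw [Real.exp_neg, inv_le_comm₀ (Real.exp_pos _) h2]
  refine le_trans ?_ h1
  rw [inv_le_iff_one_le_mul₀ h2]
  -- `(1 + y + y²/2) (1 - y + y²/2) = 1 + y⁴/4`
  nlinarith [sq_nonneg (y ^ 2)]

lemma mgf_ix_upper (S : CBSetup 𝓧 𝓐) (hμpos : ∀ x a, 0 < S.μb x a) {γ : ℝ} (hγ : 0 < γ)
    {π : 𝓧 → 𝓐 → ℝ} (hπ : IsPolicy π) :
    ∫⁻ ω, ENNReal.ofReal (Real.exp (2 * γ * ixTerm S γ π ω)) ∂(obsLaw S) ≤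
      ENNReal.ofReal (Real.exp (2 * γ * pval S π)) := by
  have hmeas := measurable_ixTerm S γ hπ
  rw [pval, ← integral_const_mul]
  refine lintegral_obsLaw_le S (by fun_prop) (fun ω => (Real.exp_pos _).le)
    (fun x a => 2 * γ * (π x a / S.μb x a)) (fun x a ρ hρ => ?_)
    ((integrable_value S hπ).const_mul _) (fun x => ?_)
  · refine (exp_ix_le (hμpos x a) hγ (mul_nonneg (hπ.1 x a) hρ.1)
      (mul_le_one₀ (hπ.le_one x a) hρ.1 hρ.2)).trans_eq ?_
    ring
  · rw [Finset.mul_sum]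
    refine Finset.sum_le_sum fun a _ => le_of_eq ?_
    have := (hμpos x a).ne'
    field_simp

lemma mgf_ix_lower (S : CBSetup 𝓧 𝓐) {γ : ℝ} (hγ : 0 < γ)
    {π : 𝓧 → 𝓐 → ℝ} (hπ : IsPolicy π) :
    ∫⁻ ω, ENNReal.ofReal (Real.exp (-(2 * γ * ixTerm S γ π ω))) ∂(obsLaw S) ≤
      ENNReal.ofReal (Real.exp (-(2 * γ) * pval S π + 4 * γ ^ 2 * covγ S γ π)) := by
  have hmeas := measurable_ixTerm S γ hπ
  have hv := (integrable_value S hπ).const_mul (-(2 * γ))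
  have hC := (integrable_coverage S hγ hπ).const_mul (4 * γ ^ 2)
  rw [pval, covγ, ← integral_const_mul, ← integral_const_mul, ← integral_add hv hC]
  refine lintegral_obsLaw_le S (by fun_prop) (fun ω => (Real.exp_pos _).le)
    (fun x a => -(2 * γ * (π x a / (S.μb x a + γ))) + 2 * γ ^ 2 * (π x a / (S.μb x a + γ) ^ 2))
    (fun x a ρ hρ => ?_) (hv.add hC) (fun x => ?_)
  · have hd : 0 < S.μb x a + γ := by linarith [S.μb_nonneg x a]
    have hp0 : 0 ≤ π x a * ρ := mul_nonneg (hπ.1 x a) hρ.1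
    have hp1 : π x a * ρ ≤ 1 := mul_le_one₀ (hπ.le_one x a) hρ.1 hρ.2
    have hy : 0 ≤ 2 * γ * (π x a * ρ / (S.μb x a + γ)) := by positivity
    refine (exp_neg_le_quadratic hy).trans ?_
    have hsq : (π x a * ρ) ^ 2 ≤ π x a * ρ := by nlinarith
    have key : (π x a * ρ) ^ 2 / (S.μb x a + γ) ^ 2 ≤ π x a * ρ / (S.μb x a + γ) ^ 2 := by
      gcongr
    have key2 := mul_le_mul_of_nonneg_left key (by positivity : 0 ≤ 2 * γ ^ 2)
    calc _ = 1 - 2 * γ * (π x a * ρ / (S.μb x a + γ)) +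
          2 * γ ^ 2 * ((π x a * ρ) ^ 2 / (S.μb x a + γ) ^ 2) := by
          rw [← div_pow]
          ring
      _ ≤ 1 - 2 * γ * (π x a * ρ / (S.μb x a + γ)) +
          2 * γ ^ 2 * (π x a * ρ / (S.μb x a + γ) ^ 2) := by linarith
      _ = _ := by ring
  · rw [Finset.mul_sum, Finset.mul_sum, ← Finset.sum_add_distrib]
    refine Finset.sum_le_sum fun a _ => ?_
    have hm := S.μb_nonneg x a
    have hd : 0 < S.μb x a + γ := by linarith
    have hp : 0 ≤ π x a * S.r x a := mul_nonneg (hπ.1 x a) (reward_mem S x a).1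
    -- `4γ²` splits evenly between the bias (`μ = (μ + γ) - γ`) and the second moment
    -- (`μ / (μ + γ)² ≤ 1 / (μ + γ)`).
    have e : -(2 * γ) * (π x a * S.r x a) + 4 * γ ^ 2 * (π x a * S.r x a / (S.μb x a + γ)) -
        S.μb x a * ((-(2 * γ * (π x a / (S.μb x a + γ))) +
          2 * γ ^ 2 * (π x a / (S.μb x a + γ) ^ 2)) * S.r x a) =
        2 * γ ^ 3 * (π x a * S.r x a) / (S.μb x a + γ) ^ 2 := by
      field_simp
      ring
    have : 0 ≤ 2 * γ ^ 3 * (π x a * S.r x a) / (S.μb x a + γ) ^ 2 := by positivity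
    linarith

/-! ### Union bound and regret -/

/-- Theorem 3, first part: with policy-dependent IX parameters `γf π > 0`
and `hatπ D` maximizing the non-uniformly scaled estimator
`ṽ†_n(π) = ṽ_n^{γf π}(π) − log(2|Π|/δ)/(2 γf π n)`, with probability at least `1-δ`,
simultaneously for every comparator `π' ∈ Pol`,
`v(π') - v(hatπ D) ≤ log(2|Π|/δ)/(γf π' · n) + 2 γf π' · C_{γf π'}(π')`. -/
theorem coverage_scaled_piwo_ix_regret
    (S : CBSetup 𝓧 𝓐) (hμpos : ∀ x a, 0 < S.μb x a)
    {n : ℕ} (hn : 0 < n) (δ : ℝ) (hδ0 : 0 < δ) (hδ1 : δ < 1)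
    (Pol : Finset (𝓧 → 𝓐 → ℝ)) (hne : Pol.Nonempty)
    (hpol : ∀ π ∈ Pol, IsPolicy π)
    (γf : (𝓧 → 𝓐 → ℝ) → ℝ) (hγf : ∀ π ∈ Pol, 0 < γf π)
    (hatπ : (Fin n → 𝓧 × 𝓐 × ℝ) → 𝓧 → 𝓐 → ℝ)
    (hmem : ∀ D, hatπ D ∈ Pol)
    (hmax : ∀ D, ∀ π ∈ Pol,
      ixEst S (γf π) π D - Real.log (2 * (Pol.card : ℝ) / δ) / (2 * γf π * n) ≤
        ixEst S (γf (hatπ D)) (hatπ D) D -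
          Real.log (2 * (Pol.card : ℝ) / δ) / (2 * γf (hatπ D) * n)) :
    ENNReal.ofReal (1 - δ) ≤
      dataLaw S n {D : Fin n → 𝓧 × 𝓐 × ℝ | ∀ π' ∈ Pol,
        pval S π' - pval S (hatπ D) ≤
          Real.log (2 * (Pol.card : ℝ) / δ) / (γf π' * n) +
            2 * γf π' * covγ S (γf π') π'} := by
  have := isProbabilityMeasure_obsLaw S
  have : IsProbabilityMeasure (dataLaw S n) := by unfold dataLaw; infer_instance
  have hn' : (0 : ℝ) < n := Nat.cast_pos.2 hn
  have hcard : (0 : ℝ) < Pol.card := Nat.cast_pos.2 hne.card_pos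
  set L : ℝ := Real.log (2 * (Pol.card : ℝ) / δ) with hL
  have hexpL : Real.exp (-L) = δ / (2 * Pol.card) := by
    rw [Real.exp_neg, hL, Real.exp_log (by positivity), inv_div]
  let U : (𝓧 → 𝓐 → ℝ) → Set (Fin n → 𝓧 × 𝓐 × ℝ) := fun π =>
    {D | n * (2 * γf π * pval S π) + L < ∑ t, 2 * γf π * ixTerm S (γf π) π (D t)}
  let V : (𝓧 → 𝓐 → ℝ) → Set (Fin n → 𝓧 × 𝓐 × ℝ) := fun π =>
    {D | n * (-(2 * γf π) * pval S π + 4 * γf π ^ 2 * covγ S (γf π) π) + L <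
      ∑ t, -(2 * γf π * ixTerm S (γf π) π (D t))}
  let B : Set (Fin n → 𝓧 × 𝓐 × ℝ) := ⋃ π ∈ Pol, (U π ∪ V π)
  have hUV : ∀ π ∈ Pol, MeasurableSet (U π ∪ V π) := fun π hπ => by
    have hm := measurable_ixTerm S (γf π) (hpol π hπ)
    exact (measurableSet_lt measurable_const (by fun_prop)).union
      (measurableSet_lt measurable_const (by fun_prop))
  have hBmeas : MeasurableSet B := Finset.measurableSet_biUnion _ hUV
  have hB : dataLaw S n B ≤ ENNReal.ofReal δ := by
    have hone : ∀ π ∈ Pol, dataLaw S n (U π ∪ V π) ≤ ENNReal.ofReal (δ / Pol.card) := by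
      intro π hπ
      have hm := measurable_ixTerm S (γf π) (hpol π hπ)
      have h1 := chernoff_dataLaw S n (by fun_prop)
        (mgf_ix_upper S hμpos (hγf π hπ) (hpol π hπ)) L
      have h2 := chernoff_dataLaw S n (by fun_prop)
        (mgf_ix_lower S (hγf π hπ) (hpol π hπ)) L
      refine (measure_union_le _ _).trans ((add_le_add h1 h2).trans_eq ?_)
      rw [hexpL, ← ENNReal.ofReal_add (by positivity) (by positivity)]
      congr 1
      field_simp
      ring
    refine (measure_biUnion_finset_le _ _).trans ((Finset.sum_le_sum hone).trans_eq ?_)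
    rw [Finset.sum_const, nsmul_eq_mul, ← ENNReal.ofReal_natCast,
      ← ENNReal.ofReal_mul hcard.le]
    congr 1
    field_simp
  have hgood : ENNReal.ofReal (1 - δ) ≤ dataLaw S n Bᶜ := by
    rw [prob_compl_eq_one_sub hBmeas, ENNReal.ofReal_sub _ hδ0.le, ENNReal.ofReal_one]
    exact tsub_le_tsub_left hB 1
  refine hgood.trans (measure_mono fun D hD π' hπ' => ?_)
  have hD' : ∀ π ∈ Pol, D ∉ U π ∧ D ∉ V π := fun π hπ => by
    constructor
    · exact fun h => hD (Set.mem_biUnion hπ (Or.inl h))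
    · exact fun h => hD (Set.mem_biUnion hπ (Or.inr h))
  have hup : ∀ π ∈ Pol, ixEst S (γf π) π D - L / (2 * γf π * n) ≤ pval S π := fun π hπ => by
    have hγ := hγf π hπ
    have h := (hD' π hπ).1
    simp only [U, Set.mem_setOf_eq, not_lt] at h
    rw [← Finset.mul_sum] at h
    rw [ixEst, sub_le_iff_le_add, div_le_iff₀ hn']
    refine le_of_mul_le_mul_left (h.trans_eq ?_) (by positivity : 0 < 2 * γf π)
    field_simp
  have hlow : pval S π' - 2 * γf π' * covγ S (γf π') π' - L / (2 * γf π' * n) ≤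
      ixEst S (γf π') π' D := by
    have hγ := hγf π' hπ'
    have h := (hD' π' hπ').2
    simp only [V, Set.mem_setOf_eq, not_lt] at h
    rw [Finset.sum_neg_distrib, ← Finset.mul_sum] at h
    rw [ixEst, le_div_iff₀ hn']
    refine le_of_mul_le_mul_left ?_ (by positivity : 0 < 2 * γf π')
    have e : 2 * γf π' *
        ((pval S π' - 2 * γf π' * covγ S (γf π') π' - L / (2 * γf π' * n)) * n) =
        -(n * (-(2 * γf π') * pval S π' + 4 * γf π' ^ 2 * covγ S (γf π') π') + L) := by
      field_simp
      ring
    rw [e]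
    linarith
  have h1 := hup (hatπ D) (hmem D)
  have h2 := hmax D π' hπ'
  have hγ := hγf π' hπ'
  have e : L / (γf π' * n) = L / (2 * γf π' * n) + L / (2 * γf π' * n) := by
    field_simp
    ring
  rw [e]
  linarith
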